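/- (Moroney-type uniqueness for mixed boundary conditions.) Let a<b, let q ∈ BV([a,b]) be non-increasing on [a,b] with q ≥ 0 a.e. and q ≢ 0, and let g satisfy (g₊) and (g_s). For α > 0 let v(·;α) denote the unique maximal solution of v'' + q(t) g(v) = 0 with v(a;α) = α and v'(a;α) = 0, and let B(α) denote the first point t ∈ (a,b] with v(t;α) = 0 when it exists. Then for every α ∈ dom B with B(α) = b one has ∂_α v(b;α) < 0. In particular, the problem u'' + q(t) g(u) = 0 with boundary conditions u'(a) = 0 = u(b) has at most one positive solution. -/

import Mathlib

open Set MeasureTheory Filter Topology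

/-- Carathéodory solution of `u'' + F(t, u) = 0` on `[a,b]`. -/
def IsCaraSol (a b : ℝ) (F : ℝ → ℝ → ℝ) (u u' : ℝ → ℝ) : Prop :=
  (∀ t ∈ Set.Icc a b, HasDerivAt u (u' t) t) ∧
  IntervalIntegrable (fun s => F s (u s)) MeasureTheory.volume a b ∧
  ∀ t ∈ Set.Icc a b, u' t = u' a - ∫ s in a..t, F s (u s)

/-- The domain of the first-zero map `B` of the shooting method. -/
def domB (a b : ℝ) (V : ℝ → ℝ → ℝ) : Set ℝ :=
  {α : ℝ | 0 < α ∧ ∃ t ∈ Set.Ioc a b, V α t = 0}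

/-- The first zero `B(α)` in `(a,b]` of the solution `v(·;α)`. -/
noncomputable def firstZero (a b : ℝ) (V : ℝ → ℝ → ℝ) (α : ℝ) : ℝ :=
  sInf {t | t ∈ Set.Ioc a b ∧ V α t = 0}

/-!
Put `v = v(·;α)` and `w = ∂_α v(·;α)`; the latter solves `w'' + q g'(v) w = 0` with `w(a) = 1` and
`w'(a) = 0`. The Wronskian `w v' - w' v` has derivative `q w (g'(v) v - g(v))`, so by `(g_s)` it is
positive as long as `w > 0`. If `v(b) = 0`, this forces `w` to vanish before `b`, first at some `τ`,
with `w'(τ) < 0`. If `w(b)` were not negative, there would be a next zero `σ ≤ b`, with `w'(σ) ≥ 0`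
and `w ≤ 0` on `[τ, σ]`. Now `(w' v')' = -q (w g(v))'`, and since `q` is non-negative and
non-increasing, Abel's inequality gives `w'(τ) v'(τ) ≤ w'(σ) v'(σ)`. As `v' < 0` on `(a, b]`, the
left side is positive and the right side is not: a contradiction.

Hence `α ↦ v(b;α)` has negative derivative at each of its zeros, so it has at most one zero.
-/

section IntervalIntegral

variable {f q : ℝ → ℝ} {a b : ℝ}

lemma intervalIntegral_pos_of_eventually_pos (hab : a < b) (hfi : IntervalIntegrable f volume a b)
    (hf : ∀ x ∈ Ioo a b, 0 ≤ f x) (hpos : ∀ᶠ x in 𝓝[>] a, 0 < f x) :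
    0 < ∫ x in a..b, f x := by
  obtain ⟨c, hac, hc⟩ := mem_nhdsGT_iff_exists_Ioo_subset.1 hpos
  have hnonneg : 0 ≤ᵐ[volume.restrict (uIoc a b)] f := by
    rw [uIoc_of_le hab.le, EventuallyLE, ← restrict_Ioo_eq_restrict_Ioc]
    exact ae_restrict_of_forall_mem measurableSet_Ioo hf
  have hsub : Ioo a (min b c) ⊆ Function.support f ∩ Ioc a b := fun x hx =>
    ⟨(hc ⟨hx.1, hx.2.trans_le (min_le_right _ _)⟩).ne', hx.1, hx.2.le.trans (min_le_left _ _)⟩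
  rw [intervalIntegral.integral_pos_iff_support_of_nonneg_ae' hnonneg hfi]
  exact ⟨hab, ((Measure.measure_Ioo_pos _).2 (lt_min hab hac)).trans_le (measure_mono hsub)⟩

lemma setIntegral_antitone_superlevel_nonneg (hq : Antitone q)
    (hf : ∀ x ∈ Icc a b, 0 ≤ ∫ r in a..x, f r) (y : ℝ) :
    0 ≤ ∫ r in Ioc a b ∩ {r | y < q r}, f r := by
  set S := Ioc a b ∩ {r | y < q r}
  rcases S.eq_empty_or_nonempty with hempty | ⟨r₀, hr₀⟩
  · simp [hempty]
  have hbdd : BddAbove S := ⟨b, fun r hr => hr.1.2⟩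
  have hx : sSup S ∈ Icc a b :=
    ⟨hr₀.1.1.le.trans (le_csSup hbdd hr₀), csSup_le ⟨r₀, hr₀⟩ fun r hr => hr.1.2⟩
  have hlower : Ioo a (sSup S) ⊆ S := fun r hr => by
    obtain ⟨r', hr', hlt⟩ := exists_lt_of_lt_csSup ⟨r₀, hr₀⟩ hr.2
    exact ⟨⟨hr.1, hr.2.le.trans hx.2⟩, lt_of_lt_of_le hr'.2 (hq hlt.le)⟩
  have hupper : S ⊆ Ioc a (sSup S) := fun r hr => ⟨hr.1.1, le_csSup hbdd hr⟩
  have hSae : S =ᵐ[volume] Ioc a (sSup S) :=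
    hupper.eventuallyLE.antisymm (Ioo_ae_eq_Ioc.symm.le.trans hlower.eventuallyLE)
  rw [setIntegral_congr_set hSae, ← intervalIntegral.integral_of_le hx.1]
  exact hf _ hx

-- Abel's inequality: by Fubini, `∫ q f` is the integral over `y` of `∫ f` over the superlevel
-- set `{q > y}`, which is an initial segment of `[a, b]`.
lemma integral_antitone_mul_nonneg (hab : a ≤ b) (hq : Antitone q) (hqb : 0 ≤ q b)
    (hfi : IntervalIntegrable f volume a b) (hf : ∀ x ∈ Icc a b, 0 ≤ ∫ r in a..x, f r) :
    0 ≤ ∫ r in a..b, q r * f r := by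
  set T : Set (ℝ × ℝ) := {p | p.2 < q p.1}
  have hT : MeasurableSet T := measurableSet_lt measurable_snd (hq.measurable.comp measurable_fst)
  have hlayer : ∀ r ∈ Ioc a b,
      q r * f r = ∫ y in Ioc 0 (q a), T.indicator (fun p => f p.1) (r, y) := by
    intro r hr
    have hsection :
        (fun y => T.indicator (fun p => f p.1) (r, y)) = (Iio (q r)).indicator fun _ => f r := rfl
    have hset : Ioc 0 (q a) ∩ Iio (q r) = Ioo 0 (q r) := by
      ext y
      have := hq hr.1.le
      simp only [mem_inter_iff, mem_Ioc, mem_Iio, mem_Ioo]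
      grind
    rw [hsection, setIntegral_indicator measurableSet_Iio, hset, setIntegral_const,
      Real.volume_real_Ioo_of_le (hqb.trans (hq hr.2)), sub_zero, smul_eq_mul]
  have hint : Integrable (T.indicator fun p => f p.1)
      ((volume.restrict (Ioc a b)).prod (volume.restrict (Ioc 0 (q a)))) :=
    (hfi.1.comp_fst _).indicator hT
  rw [intervalIntegral.integral_of_le hab, setIntegral_congr_fun measurableSet_Ioc hlayer,
    integral_integral_swap (f := fun r y => T.indicator (fun p => f p.1) (r, y)) hint]
  refine integral_nonneg fun y => ?_
  have hsection : (fun r => T.indicator (fun p => f p.1) (r, y)) = {r | y < q r}.indicator f := rfl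
  rw [hsection, setIntegral_indicator (measurableSet_lt measurable_const hq.measurable)]
  exact setIntegral_antitone_superlevel_nonneg hq hf y

end IntervalIntegral

section ZerosOnAnInterval

variable {f f' : ℝ → ℝ} {a b : ℝ}

lemma exists_first_zero (hab : a ≤ b) (hf : ContinuousOn f (Icc a b)) (hfa : 0 < f a)
    (hfb : f b ≤ 0) : ∃ τ ∈ Ioc a b, f τ = 0 ∧ ∀ t ∈ Ico a τ, 0 < f t := by
  have hcompact : IsCompact (Icc a b ∩ f ⁻¹' Iic 0) :=
    isCompact_Icc.of_isClosed_subset (hf.preimage_isClosed_of_isClosed isClosed_Icc isClosed_Iic)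
      inter_subset_left
  obtain ⟨τ, ⟨hτ, hfτ : f τ ≤ 0⟩, hleast⟩ := hcompact.exists_isLeast ⟨b, right_mem_Icc.2 hab, hfb⟩
  obtain ⟨x, hx, hfx⟩ := intermediate_value_Icc' hτ.1 (hf.mono (Icc_subset_Icc_right hτ.2))
    ⟨hfτ, hfa.le⟩
  have hxτ : x = τ := le_antisymm hx.2 (hleast ⟨⟨hx.1, hx.2.trans hτ.2⟩, hfx.le⟩)
  have hτ0 : f τ = 0 := hxτ ▸ hfx
  refine ⟨τ, ⟨hτ.1.lt_of_ne fun h => ?_, hτ.2⟩, hτ0, fun t ht => ?_⟩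
  · rw [h, hτ0] at hfa
    exact hfa.false
  · by_contra! hft
    exact ht.2.not_ge (hleast ⟨⟨ht.1, ht.2.le.trans hτ.2⟩, hft⟩)

lemma eventually_neg_right_of_deriv_neg {f₁ : ℝ} (hf : HasDerivAt f f₁ a) (hfa : f a = 0)
    (hf₁ : f₁ < 0) : ∀ᶠ t in 𝓝[>] a, f t < 0 := by
  have hslope : Tendsto (slope f a) (𝓝[>] a) (𝓝 f₁) :=
    (hasDerivAt_iff_tendsto_slope_left_right.1 hf).2
  filter_upwards [hslope.eventually_lt_const hf₁, self_mem_nhdsWithin] with t ht hat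
  rw [slope_def_field, hfa, sub_zero] at ht
  exact neg_of_div_neg_left ht (sub_pos.2 hat).le

lemma deriv_nonneg_of_neg_left {f₁ : ℝ} (hf : HasDerivAt f f₁ a) (hfa : f a = 0)
    (hneg : ∀ᶠ t in 𝓝[<] a, f t < 0) : 0 ≤ f₁ := by
  have hslope : Tendsto (slope f a) (𝓝[<] a) (𝓝 f₁) :=
    (hasDerivAt_iff_tendsto_slope_left_right.1 hf).1
  refine ge_of_tendsto hslope ?_
  filter_upwards [hneg, self_mem_nhdsWithin] with t ht hta
  rw [slope_def_field, hfa, sub_zero]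
  exact div_nonneg_of_nonpos ht.le (sub_neg.2 hta).le

lemma exists_next_zero (hab : a < b) (hf : ∀ t ∈ Icc a b, HasDerivAt f (f' t) t) (hfa : f a = 0)
    (hf'a : f' a < 0) (hfb : 0 ≤ f b) :
    ∃ σ ∈ Ioc a b, f σ = 0 ∧ 0 ≤ f' σ ∧ ∀ t ∈ Ioo a σ, f t < 0 := by
  have hneg := eventually_neg_right_of_deriv_neg (hf a (left_mem_Icc.2 hab.le)) hfa hf'a
  obtain ⟨c, hac, hc⟩ := mem_nhdsGT_iff_exists_Ioo_subset.1 hneg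
  obtain ⟨m, ham, hm⟩ := exists_between (lt_min hab hac)
  obtain ⟨hmb, hmc⟩ := lt_min_iff.1 hm
  have hcont : ContinuousOn (fun t => -f t) (Icc m b) := fun t ht =>
    (hf t ⟨ham.le.trans ht.1, ht.2⟩).continuousAt.neg.continuousWithinAt
  obtain ⟨σ, hσ, hfσ, hpos⟩ := exists_first_zero hmb.le hcont (neg_pos.2 (hc ⟨ham, hmc⟩))
    (neg_nonpos.2 hfb)
  have haσ : a < σ := ham.trans hσ.1
  have hneg' : ∀ t ∈ Ioo a σ, f t < 0 := fun t ht => by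
    rcases lt_or_ge t m with h | h
    · exact hc ⟨ht.1, h.trans hmc⟩
    · exact neg_pos.1 (hpos t ⟨h, ht.2⟩)
  refine ⟨σ, ⟨haσ, hσ.2⟩, neg_eq_zero.1 hfσ, ?_, hneg'⟩
  exact deriv_nonneg_of_neg_left (hf σ ⟨haσ.le, hσ.2⟩) (neg_eq_zero.1 hfσ)
    (eventually_of_mem (Ioo_mem_nhdsLT haσ) hneg')

lemma subsingleton_zeros_of_deriv_neg {s : Set ℝ} (hs : s.OrdConnected)
    (hf : ∀ t ∈ s, HasDerivAt f (f' t) t) (hneg : ∀ t ∈ s, f t = 0 → f' t < 0) :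
    {t ∈ s | f t = 0}.Subsingleton := by
  suffices hlt : ∀ x ∈ s, ∀ y ∈ s, f x = 0 → f y = 0 → ¬ x < y by
    intro x hx y hy
    exact le_antisymm (not_lt.1 (hlt y hy.1 x hx.1 hy.2 hx.2))
      (not_lt.1 (hlt x hx.1 y hy.1 hx.2 hy.2))
  intro x hx y hy hfx hfy hxy
  obtain ⟨σ, hσ, hfσ, hf'σ, -⟩ := exists_next_zero hxy (fun t ht => hf t (hs.out hx hy ht)) hfx
    (hneg x hx hfx) hfy.ge
  exact (hneg σ (hs.out hx hy (Ioc_subset_Icc_self hσ)) hfσ).not_ge hf'σ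

end ZerosOnAnInterval

lemma le_mul_exp_of_le_add_integral {φ : ℝ → ℝ} {a b ε K : ℝ} (hK : 0 ≤ K)
    (hφ : ContinuousOn φ (Icc a b)) (hle : ∀ t ∈ Icc a b, φ t ≤ ε + K * ∫ s in a..t, φ s) :
    ∀ t ∈ Icc a b, φ t ≤ ε * Real.exp (K * (t - a)) := by
  rcases hK.eq_or_lt with rfl | hK
  · simpa using hle
  intro t ht
  have hab := ht.1.trans ht.2
  have hderiv : ∀ s ∈ Ico a b, HasDerivWithinAt (fun x => ∫ r in a..x, φ r) (φ s) (Ici s) s := by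
    intro s hs
    have hmem : Icc a b ∈ 𝓝[>] s := Icc_mem_nhdsGT_of_mem hs
    have hint : IntervalIntegrable φ volume a s :=
      (hφ.mono (Icc_subset_Icc_right hs.2.le)).intervalIntegrable_of_Icc hs.1
    exact intervalIntegral.integral_hasDerivWithinAt_right hint
      ⟨_, hmem, hφ.aestronglyMeasurable measurableSet_Icc⟩
      ((hφ s (Ico_subset_Icc_self hs)).mono_of_mem_nhdsWithin hmem)
  have hcont : ContinuousOn (fun x => ∫ r in a..x, φ r) (Icc a b) := by
    rw [← uIcc_of_le hab] at hφ ⊢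
    exact intervalIntegral.continuousOn_primitive_interval hφ.integrableOn_uIcc
  have hbound := le_gronwallBound_of_liminf_deriv_right_le (δ := 0) hcont
    (fun s hs r hr => (hderiv s hs).liminf_right_slope_le hr) (by simp)
    (fun s hs => (hle s (Ico_subset_Icc_self hs)).trans_eq (add_comm _ _)) t ht
  rw [gronwallBound_of_K_ne_0 hK.ne'] at hbound
  calc φ t ≤ ε + K * ∫ s in a..t, φ s := hle t ht
    _ ≤ ε + K * (0 * Real.exp (K * (t - a)) + ε / K * (Real.exp (K * (t - a)) - 1)) := by gcongr
    _ = ε * Real.exp (K * (t - a)) := by field_simp; ring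

section ParametricIntervalIntegral

variable {F : ℝ → ℝ → ℝ} {F' : ℝ → ℝ} {x₀ a b : ℝ} {U : Set ℝ} {C : NNReal}

lemma aestronglyMeasurable_of_hasDerivAt {μ : Measure ℝ}
    (hF : ∀ᶠ x in 𝓝 x₀, AEStronglyMeasurable (F x) μ)
    (hderiv : ∀ᵐ t ∂μ, HasDerivAt (fun x => F x t) (F' t) x₀) : AEStronglyMeasurable F' μ := by
  have hF' : ∀ᶠ x in 𝓝[≠] x₀, AEStronglyMeasurable (F x) μ := hF.filter_mono nhdsWithin_le_nhds
  obtain ⟨x, hx, hmeas⟩ := exists_seq_forall_of_frequently hF'.frequently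
  refine aestronglyMeasurable_of_tendsto_ae atTop
    (fun n => ((hmeas n).sub hF.self_of_nhds).const_mul (x n - x₀)⁻¹) ?_
  filter_upwards [hderiv] with t ht
  exact (hasDerivAt_iff_tendsto_slope.1 ht).comp hx

lemma hasDerivAt_intervalIntegral_of_lipschitzOnWith (hU : U ∈ 𝓝 x₀)
    (hint : ∀ x ∈ U, IntervalIntegrable (F x) volume a b)
    (hlip : ∀ t ∈ uIoc a b, LipschitzOnWith C (fun x => F x t) U)
    (hderiv : ∀ᵐ t, t ∈ uIoc a b → HasDerivAt (fun x => F x t) (F' t) x₀) :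
    IntervalIntegrable F' volume a b ∧
      HasDerivAt (fun x => ∫ t in a..b, F x t) (∫ t in a..b, F' t) x₀ := by
  have hmeas : ∀ᶠ x in 𝓝 x₀, AEStronglyMeasurable (F x) (volume.restrict (uIoc a b)) :=
    eventually_of_mem hU fun x hx => (hint x hx).def'.aestronglyMeasurable
  have hmeas' : AEStronglyMeasurable F' (volume.restrict (uIoc a b)) :=
    aestronglyMeasurable_of_hasDerivAt hmeas ((ae_restrict_iff' measurableSet_uIoc).2 hderiv)
  have hC : Real.nnabs C = C := NNReal.eq (abs_of_nonneg C.2)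
  exact intervalIntegral.hasDerivAt_integral_of_dominated_loc_of_lip (bound := fun _ => C) hU
    hmeas (hint x₀ (mem_of_mem_nhds hU)) hmeas'
    (Eventually.of_forall fun t ht => hC.symm ▸ hlip t ht) intervalIntegrable_const hderiv

lemma lipschitzOnWith_intervalIntegral
    (hint : ∀ x ∈ U, IntervalIntegrable (F x) volume a b)
    (hlip : ∀ t ∈ uIoc a b, LipschitzOnWith C (fun x => F x t) U) :
    LipschitzOnWith (C * Real.nnabs (b - a)) (fun x => ∫ t in a..b, F x t) U := by
  refine LipschitzOnWith.of_dist_le_mul fun x hx y hy => ?_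
  rw [dist_eq_norm, ← intervalIntegral.integral_sub (hint x hx) (hint y hy)]
  refine (intervalIntegral.norm_integral_le_of_norm_le_const fun t ht =>
    (hlip t ht).dist_le_mul x hx y hy).trans_eq ?_
  rw [NNReal.coe_mul, Real.coe_nnabs, mul_right_comm]

end ParametricIntervalIntegral

/-! ### Carathéodory solutions -/

/-- `f` is an indefinite integral of `φ` on `[a, b]`, i.e. `f` is absolutely continuous there with
derivative `φ` almost everywhere. -/
def IsIndefiniteIntegral (a b : ℝ) (f φ : ℝ → ℝ) : Prop :=
  IntervalIntegrable φ volume a b ∧ ∀ t ∈ Icc a b, f t = f a + ∫ s in a..t, φ s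

namespace IsIndefiniteIntegral

variable {a b : ℝ} {f φ g ψ : ℝ → ℝ}

lemma intervalIntegrable (hf : IsIndefiniteIntegral a b f φ) {s t : ℝ} (hs : s ∈ Icc a b)
    (ht : t ∈ Icc a b) : IntervalIntegrable φ volume s t :=
  hf.1.mono_set (uIcc_subset_uIcc (Icc_subset_uIcc hs) (Icc_subset_uIcc ht))

lemma absolutelyContinuousOnInterval (hab : a ≤ b) (hf : IsIndefiniteIntegral a b f φ) :
    AbsolutelyContinuousOnInterval f a b := by
  have hprim := hf.1.absolutelyContinuousOnInterval_intervalIntegral left_mem_uIcc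
  rw [absolutelyContinuousOnInterval_iff] at hprim ⊢
  intro ε hε
  obtain ⟨δ, hδ, h⟩ := hprim ε hε
  refine ⟨δ, hδ, fun E hE hlen => (Finset.sum_congr rfl fun i hi => ?_).trans_lt (h E hE hlen)⟩
  have hmem := hE.1 i hi
  rw [uIcc_of_le hab] at hmem
  rw [hf.2 _ hmem.1, hf.2 _ hmem.2, dist_add_left]

lemma continuousOn (hab : a ≤ b) (hf : IsIndefiniteIntegral a b f φ) :
    ContinuousOn f (Icc a b) :=
  uIcc_of_le hab ▸ (hf.absolutelyContinuousOnInterval hab).continuousOn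

lemma ae_hasDerivAt (hf : IsIndefiniteIntegral a b f φ) :
    ∀ᵐ t, t ∈ Ioo a b → HasDerivAt f (φ t) t := by
  filter_upwards [hf.1.ae_hasDerivAt_integral] with t hderiv ht
  have heq : f =ᶠ[𝓝 t] fun x => f a + ∫ s in a..x, φ s :=
    eventually_of_mem (Icc_mem_nhds ht.1 ht.2) hf.2
  exact ((hderiv (Icc_subset_uIcc (Ioo_subset_Icc_self ht)) a left_mem_uIcc).const_add
    _).congr_of_eventuallyEq heq

lemma intervalIntegrable_mul_add_mul (hf : IsIndefiniteIntegral a b f φ)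
    (hg : IsIndefiniteIntegral a b g ψ) {s t : ℝ} (hs : s ∈ Icc a b) (ht : t ∈ Icc a b) :
    IntervalIntegrable (fun r => φ r * g r + f r * ψ r) volume s t := by
  have hab : a ≤ b := hs.1.trans hs.2
  have hsub : uIcc s t ⊆ Icc a b := ordConnected_Icc.uIcc_subset hs ht
  exact ((hf.intervalIntegrable hs ht).mul_continuousOn ((hg.continuousOn hab).mono hsub)).add
    ((hg.intervalIntegrable hs ht).continuousOn_mul ((hf.continuousOn hab).mono hsub))

lemma integral_mul_add_mul (hf : IsIndefiniteIntegral a b f φ) (hg : IsIndefiniteIntegral a b g ψ)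
    {s t : ℝ} (hs : s ∈ Icc a b) (ht : t ∈ Icc a b) :
    ∫ r in s..t, (φ r * g r + f r * ψ r) = f t * g t - f s * g s := by
  have hab : a ≤ b := hs.1.trans hs.2
  have hsub : uIcc s t ⊆ uIcc a b := uIcc_subset_uIcc (Icc_subset_uIcc hs) (Icc_subset_uIcc ht)
  rw [← ((hf.absolutelyContinuousOnInterval hab).mono hsub).integral_deriv_mul_eq_sub
    ((hg.absolutelyContinuousOnInterval hab).mono hsub)]
  refine intervalIntegral.integral_congr_ae ?_
  have hne : ∀ c : ℝ, ∀ᵐ r, r ≠ c := fun c => compl_mem_ae_iff.2 (measure_singleton c)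
  filter_upwards [hf.ae_hasDerivAt, hg.ae_hasDerivAt, hne a, hne b] with r hfr hgr hra hrb hr
  have hrI : r ∈ Icc a b := uIcc_of_le hab ▸ hsub (uIoc_subset_uIcc hr)
  have hrab : r ∈ Ioo a b := ⟨hrI.1.lt_of_ne' hra, hrI.2.lt_of_ne hrb⟩
  rw [(hfr hrab).deriv, (hgr hrab).deriv]

end IsIndefiniteIntegral

namespace IsCaraSol

variable {a b : ℝ} {F G : ℝ → ℝ → ℝ} {u u' v v' : ℝ → ℝ}

lemma congr_ae (hab : a ≤ b) (hu : IsCaraSol a b F u u')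
    (hFG : ∀ᵐ s ∂volume.restrict (Icc a b), F s (u s) = G s (u s)) : IsCaraSol a b G u u' := by
  have hcongr : ∀ t ∈ Icc a b,
      (fun s => F s (u s)) =ᵐ[volume.restrict (uIoc a t)] fun s => G s (u s) := fun t ht =>
    ae_restrict_of_ae_restrict_of_subset
      (uIoc_of_le ht.1 ▸ Ioc_subset_Icc_self.trans (Icc_subset_Icc_right ht.2)) hFG
  refine ⟨hu.1, ?_, fun t ht => ?_⟩
  · exact hu.2.1.congr_ae (hcongr b (right_mem_Icc.2 hab))
  · rw [hu.2.2 t ht, intervalIntegral.integral_congr_ae_restrict (hcongr t ht)]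

lemma continuousOn (hu : IsCaraSol a b F u u') : ContinuousOn u (Icc a b) := fun t ht =>
  (hu.1 t ht).continuousAt.continuousWithinAt

lemma isIndefiniteIntegral_deriv (hu : IsCaraSol a b F u u') :
    IsIndefiniteIntegral a b u' fun s => -F s (u s) :=
  ⟨hu.2.1.neg, fun t ht => by rw [hu.2.2 t ht, intervalIntegral.integral_neg, sub_eq_add_neg]⟩

lemma isIndefiniteIntegral (hab : a ≤ b) (hu : IsCaraSol a b F u u') :
    IsIndefiniteIntegral a b u u' := by
  have hcont : ContinuousOn u' (Icc a b) := hu.isIndefiniteIntegral_deriv.continuousOn hab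
  refine ⟨hcont.intervalIntegrable_of_Icc hab, fun t ht => ?_⟩
  have hsub : Icc a t ⊆ Icc a b := Icc_subset_Icc_right ht.2
  rw [intervalIntegral.integral_eq_sub_of_hasDerivAt
    (fun s hs => hu.1 s (hsub (uIcc_of_le ht.1 ▸ hs)))
    ((hcont.mono hsub).intervalIntegrable_of_Icc ht.1), add_sub_cancel]

lemma deriv_neg (hu : IsCaraSol a b F u u') (hu'a : u' a = 0)
    (hF : ∀ t ∈ Ioo a b, 0 ≤ F t (u t)) (hpos : ∀ᶠ t in 𝓝[>] a, 0 < F t (u t)) :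
    ∀ t ∈ Ioc a b, u' t < 0 := by
  intro t ht
  rw [hu.2.2 t (Ioc_subset_Icc_self ht), hu'a, zero_sub, neg_neg_iff_pos]
  exact intervalIntegral_pos_of_eventually_pos ht.1
    (hu.2.1.mono_set (uIcc_subset_uIcc left_mem_uIcc (Icc_subset_uIcc (Ioc_subset_Icc_self ht))))
    (fun s hs => hF s ⟨hs.1, hs.2.trans_le ht.2⟩) hpos

lemma strictAntiOn (hu : IsCaraSol a b F u u') (hu' : ∀ t ∈ Ioc a b, u' t < 0) :
    StrictAntiOn u (Icc a b) :=
  strictAntiOn_of_deriv_neg (convex_Icc a b) hu.continuousOn fun t ht => by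
    rw [interior_Icc] at ht
    rw [(hu.1 t (Ioo_subset_Icc_self ht)).deriv]
    exact hu' t (Ioo_subset_Ioc_self ht)

lemma integral_wronskian (hu : IsCaraSol a b F u u') (hv : IsCaraSol a b G v v') {s t : ℝ}
    (hs : s ∈ Icc a b) (ht : t ∈ Icc a b) :
    ∫ r in s..t, (F r (u r) * v r - u r * G r (v r)) =
      (u t * v' t - u' t * v t) - (u s * v' s - u' s * v s) := by
  have hab : a ≤ b := hs.1.trans hs.2
  have hu₁ := hu.isIndefiniteIntegral hab
  have hv₁ := hv.isIndefiniteIntegral hab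
  have hu₂ := hu.isIndefiniteIntegral_deriv
  have hv₂ := hv.isIndefiniteIntegral_deriv
  calc ∫ r in s..t, (F r (u r) * v r - u r * G r (v r))
      = ∫ r in s..t, ((u' r * v' r + u r * -G r (v r)) - (-F r (u r) * v r + u' r * v' r)) :=
        intervalIntegral.integral_congr fun r _ => by ring
    _ = (u t * v' t - u s * v' s) - (u' t * v t - u' s * v s) := by
        rw [intervalIntegral.integral_sub (hu₁.intervalIntegrable_mul_add_mul hv₂ hs ht)
          (hu₂.intervalIntegrable_mul_add_mul hv₁ hs ht), hu₁.integral_mul_add_mul hv₂ hs ht,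
          hu₂.integral_mul_add_mul hv₁ hs ht]
    _ = (u t * v' t - u' t * v t) - (u s * v' s - u' s * v s) := by ring

lemma integral_deriv_mul_deriv (hu : IsCaraSol a b F u u') (hv : IsCaraSol a b G v v') {s t : ℝ}
    (hs : s ∈ Icc a b) (ht : t ∈ Icc a b) :
    ∫ r in s..t, (F r (u r) * v' r + u' r * G r (v r)) = u' s * v' s - u' t * v' t := by
  rw [← neg_sub, ← hu.isIndefiniteIntegral_deriv.integral_mul_add_mul
    hv.isIndefiniteIntegral_deriv hs ht, ← intervalIntegral.integral_neg]
  exact intervalIntegral.integral_congr fun r _ => by ring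

lemma abs_deriv_sub_le {K : ℝ} (hu : IsCaraSol a b F u u') (hv : IsCaraSol a b F v v')
    (ha : u' a = v' a) (hK : ∀ t ∈ Icc a b, |F t (u t) - F t (v t)| ≤ K * |u t - v t|) :
    ∀ t ∈ Icc a b, |u' t - v' t| ≤ K * ∫ s in a..t, |u s - v s| := by
  intro t ht
  have hsub : Icc a t ⊆ Icc a b := Icc_subset_Icc_right ht.2
  have hleft : a ∈ Icc a b := left_mem_Icc.2 (ht.1.trans ht.2)
  have hui := (hu.isIndefiniteIntegral_deriv.intervalIntegrable hleft ht).neg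
  have hvi := (hv.isIndefiniteIntegral_deriv.intervalIntegrable hleft ht).neg
  simp only [Pi.neg_def, neg_neg] at hui hvi
  have hd : u' t - v' t = -∫ s in a..t, (F s (u s) - F s (v s)) := by
    rw [hu.2.2 t ht, hv.2.2 t ht, ha, intervalIntegral.integral_sub hui hvi]
    ring
  rw [hd, abs_neg, ← intervalIntegral.integral_const_mul]
  refine (intervalIntegral.abs_integral_le_integral_abs ht.1).trans
    (intervalIntegral.integral_mono_on ht.1 (hui.sub hvi).abs ?_ fun s hs => hK s (hsub hs))
  exact ((continuousOn_const.mul (hu.continuousOn.sub hv.continuousOn).abs).mono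
    hsub).intervalIntegrable_of_Icc ht.1

lemma abs_sub_le {K : ℝ} (hK₀ : 0 ≤ K) (hu : IsCaraSol a b F u u') (hv : IsCaraSol a b F v v')
    (ha : u' a = v' a) (hK : ∀ t ∈ Icc a b, |F t (u t) - F t (v t)| ≤ K * |u t - v t|) :
    ∀ t ∈ Icc a b, |u t - v t| ≤ |u a - v a| * Real.exp (K * (b - a) * (b - a)) := by
  have hcont : ContinuousOn (fun t => |u t - v t|) (Icc a b) :=
    (hu.continuousOn.sub hv.continuousOn).abs
  have hgrowth : ∀ t ∈ Icc a b,
      |u t - v t| ≤ |u a - v a| + K * (b - a) * ∫ s in a..t, |u s - v s| := by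
    intro t ht
    have hsub : Icc a t ⊆ Icc a b := Icc_subset_Icc_right ht.2
    set I := ∫ s in a..t, |u s - v s|
    have hI : 0 ≤ I := intervalIntegral.integral_nonneg ht.1 fun _ _ => abs_nonneg _
    have hderiv : ∀ s ∈ Ico a t, ‖u' s - v' s‖ ≤ K * I := fun s hs => by
      have hsb : s ∈ Icc a b := hsub (Ico_subset_Icc_self hs)
      refine (abs_deriv_sub_le hu hv ha hK s hsb).trans (mul_le_mul_of_nonneg_left ?_ hK₀)
      exact intervalIntegral.integral_mono_interval le_rfl hs.1 hs.2.le
        (Eventually.of_forall fun _ => abs_nonneg _)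
        ((hcont.mono hsub).intervalIntegrable_of_Icc ht.1)
    have hmean := norm_image_sub_le_of_norm_deriv_le_segment'
      (fun s hs => ((hu.1 s (hsub hs)).sub (hv.1 s (hsub hs))).hasDerivWithinAt) hderiv t
      (right_mem_Icc.2 ht.1)
    have htri := abs_sub_abs_le_abs_sub (u t - v t) (u a - v a)
    simp only [Pi.sub_apply, Real.norm_eq_abs] at hmean
    nlinarith [mul_nonneg hK₀ hI, ht.2]
  intro t ht
  have hba : 0 ≤ b - a := sub_nonneg.2 (ht.1.trans ht.2)
  have hta : t - a ≤ b - a := sub_le_sub_right ht.2 a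
  calc |u t - v t| ≤ |u a - v a| * Real.exp (K * (b - a) * (t - a)) :=
        le_mul_exp_of_le_add_integral (mul_nonneg hK₀ hba) hcont hgrowth t ht
    _ ≤ |u a - v a| * Real.exp (K * (b - a) * (b - a)) := by gcongr

end IsCaraSol

lemma exists_isCaraSol_of_intervalIntegrable {φ : ℝ → ℝ} {a b : ℝ}
    (hφ : IntervalIntegrable φ volume a b) (x₀ : ℝ) :
    ∃ w z, IsCaraSol a b (fun t _ => φ t) w z ∧ w a = x₀ ∧ z a = 0 ∧
      ∀ t ∈ Icc a b, w t = x₀ + ∫ s in a..t, -∫ r in a..s, φ r := by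
  -- Extending `φ` by zero makes `w` differentiable at the endpoints as well.
  set ψ := (Ioc a b).indicator φ
  have hψ : Integrable ψ := hφ.1.integrable_indicator measurableSet_Ioc
  have hψφ : ∀ t ∈ Icc a b, ∫ s in a..t, ψ s = ∫ s in a..t, φ s := fun t ht => by
    rw [intervalIntegral.integral_of_le ht.1, intervalIntegral.integral_of_le ht.1]
    exact setIntegral_congr_fun measurableSet_Ioc fun s hs =>
      indicator_of_mem (Ioc_subset_Ioc_right ht.2 hs) φ
  set z : ℝ → ℝ := fun t => -∫ s in a..t, ψ s
  have hz : Continuous z :=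
    (intervalIntegral.continuous_primitive (fun _ _ => hψ.intervalIntegrable) a).neg
  have hzφ : ∀ t ∈ Icc a b, z t = -∫ s in a..t, φ s := fun t ht => congrArg Neg.neg (hψφ t ht)
  have hza : z a = 0 := neg_eq_zero.2 intervalIntegral.integral_same
  refine ⟨fun t => x₀ + ∫ s in a..t, z s, z, ⟨fun t _ => ?_, hφ, fun t ht => ?_⟩, ?_, hza,
    fun t ht => ?_⟩
  · exact (hz.integral_hasStrictDerivAt a t).hasDerivAt.const_add x₀
  · rw [hza, zero_sub, hzφ t ht]
  · beta_reduce
    rw [intervalIntegral.integral_same, add_zero]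
  · refine congrArg (x₀ + ·) (intervalIntegral.integral_congr fun s hs => hzφ s ?_)
    rw [uIcc_of_le ht.1] at hs
    exact Icc_subset_Icc_right ht.2 hs

/-! ### Differentiation with respect to the initial value -/

/-- On `[a, b]`, `V β` is for each initial value `β ∈ U` the solution of `u'' + F(t, u) = 0` with
`u(a) = β`, `u'(a) = 0`, and `V' β` is its time derivative. -/
structure IsShootingFamily (a b : ℝ) (F : ℝ → ℝ → ℝ) (U : Set ℝ) (V V' : ℝ → ℝ → ℝ) : Prop where
  isCaraSol : ∀ β ∈ U, IsCaraSol a b F (V β) (V' β)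
  apply_left : ∀ β ∈ U, V β a = β
  deriv_left : ∀ β ∈ U, V' β a = 0

namespace IsShootingFamily

variable {a b α : ℝ} {F V V' : ℝ → ℝ → ℝ} {S U : Set ℝ} {p : ℝ → ℝ} {C K : NNReal}

lemma mono {U' : Set ℝ} (hV : IsShootingFamily a b F U V V') (hU : U' ⊆ U) :
    IsShootingFamily a b F U' V V' where
  isCaraSol β hβ := hV.isCaraSol β (hU hβ)
  apply_left β hβ := hV.apply_left β (hU hβ)
  deriv_left β hβ := hV.deriv_left β (hU hβ)

lemma exists_lipschitzOnWith (hV : IsShootingFamily a b F U V V')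
    (hF : ∀ t ∈ Icc a b, LipschitzOnWith K (F t) S) (hVS : ∀ β ∈ U, MapsTo (V β) (Icc a b) S) :
    ∃ C, ∀ t ∈ Icc a b, LipschitzOnWith C (fun β => V β t) U := by
  refine ⟨⟨Real.exp (K * (b - a) * (b - a)), (Real.exp_pos _).le⟩, fun t ht =>
    LipschitzOnWith.of_dist_le_mul fun β hβ β' hβ' => ?_⟩
  have hbound := (hV.isCaraSol β hβ).abs_sub_le K.2 (hV.isCaraSol β' hβ')
    ((hV.deriv_left β hβ).trans (hV.deriv_left β' hβ').symm)
    (fun s hs => (hF s hs).dist_le_mul _ (hVS β hβ hs) _ (hVS β' hβ' hs)) t ht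
  rwa [hV.apply_left β hβ, hV.apply_left β' hβ', mul_comm] at hbound

lemma deriv_apply (hV : IsShootingFamily a b F U V V') {β t : ℝ} (hβ : β ∈ U)
    (ht : t ∈ Icc a b) : V' β t = -∫ s in a..t, F s (V β s) := by
  rw [(hV.isCaraSol β hβ).2.2 t ht, hV.deriv_left β hβ, zero_sub]

lemma intervalIntegrable (hV : IsShootingFamily a b F U V V') {β t : ℝ} (hβ : β ∈ U)
    (ht : t ∈ Icc a b) : IntervalIntegrable (fun s => F s (V β s)) volume a t :=
  (hV.isCaraSol β hβ).2.1.mono_set (uIcc_subset_uIcc left_mem_uIcc (Icc_subset_uIcc ht))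

lemma hasDerivAt_deriv (hV : IsShootingFamily a b F U V V') (hU : U ∈ 𝓝 α)
    (hlip : ∀ t ∈ Icc a b, LipschitzOnWith C (fun β => F t (V β t)) U)
    (hp : ∀ᵐ t, t ∈ Ioc a b → HasDerivAt (fun β => F t (V β t)) (p t) α) :
    ∀ t ∈ Icc a b, IntervalIntegrable p volume a t ∧
      HasDerivAt (fun β => V' β t) (-∫ s in a..t, p s) α := by
  intro t ht
  have hsub : uIoc a t ⊆ Ioc a b := uIoc_of_le ht.1 ▸ Ioc_subset_Ioc_right ht.2
  obtain ⟨hint, hderiv⟩ := hasDerivAt_intervalIntegral_of_lipschitzOnWith hU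
    (fun β hβ => hV.intervalIntegrable hβ ht)
    (fun s hs => hlip s (Ioc_subset_Icc_self (hsub hs))) (hp.mono fun s hs hsI => hs (hsub hsI))
  exact ⟨hint, hderiv.neg.congr_of_eventuallyEq
    (eventually_of_mem hU fun β hβ => hV.deriv_apply hβ ht)⟩

lemma lipschitzOnWith_deriv (hV : IsShootingFamily a b F U V V')
    (hlip : ∀ t ∈ Icc a b, LipschitzOnWith C (fun β => F t (V β t)) U) :
    ∀ t ∈ Icc a b, LipschitzOnWith (C * Real.nnabs (b - a)) (fun β => V' β t) U := by
  intro t ht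
  have hsub : uIoc a t ⊆ Icc a b :=
    uIoc_of_le ht.1 ▸ Ioc_subset_Icc_self.trans (Icc_subset_Icc_right ht.2)
  have hle : Real.nnabs (t - a) ≤ Real.nnabs (b - a) := by
    rw [← NNReal.coe_le_coe, Real.coe_nnabs, Real.coe_nnabs]
    exact abs_le_abs_of_nonneg (sub_nonneg.2 ht.1) (sub_le_sub_right ht.2 a)
  have hint := (lipschitzOnWith_intervalIntegral (fun β hβ => hV.intervalIntegrable hβ ht)
    fun s hs => hlip s (hsub hs)).neg.weaken (mul_le_mul_right hle C)
  intro β hβ β' hβ'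
  beta_reduce
  rw [hV.deriv_apply hβ ht, hV.deriv_apply hβ' ht]
  exact hint hβ hβ'

lemma hasDerivAt (hV : IsShootingFamily a b F U V V') (hU : U ∈ 𝓝 α)
    (hlip : ∀ t ∈ Icc a b, LipschitzOnWith C (fun β => F t (V β t)) U)
    (hp : ∀ᵐ t, t ∈ Ioc a b → HasDerivAt (fun β => F t (V β t)) (p t) α) :
    ∀ t ∈ Icc a b, HasDerivAt (fun β => V β t) (1 + ∫ s in a..t, -∫ r in a..s, p r) α := by
  intro t ht
  have hab : a ≤ b := ht.1.trans ht.2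
  have hsub : uIoc a t ⊆ Icc a b :=
    uIoc_of_le ht.1 ▸ Ioc_subset_Icc_self.trans (Icc_subset_Icc_right ht.2)
  have hV' : ∀ β ∈ U, IsIndefiniteIntegral a b (V β) (V' β) := fun β hβ =>
    (hV.isCaraSol β hβ).isIndefiniteIntegral hab
  have hderiv := (hasDerivAt_intervalIntegral_of_lipschitzOnWith hU
    (fun β hβ => (hV' β hβ).intervalIntegrable (left_mem_Icc.2 hab) ht)
    (fun s hs => hV.lipschitzOnWith_deriv hlip s (hsub hs))
    (Eventually.of_forall fun s hs => (hV.hasDerivAt_deriv hU hlip hp s (hsub hs)).2)).2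
  refine ((hasDerivAt_id' α).add hderiv).congr_of_eventuallyEq
    (eventually_of_mem hU fun β hβ => ?_)
  exact ((hV' β hβ).2 t ht).trans (congrArg (· + _) (hV.apply_left β hβ))

lemma exists_linearized_solution (hab : a ≤ b) (hV : IsShootingFamily a b F U V V') (hU : U ∈ 𝓝 α)
    (hF : ∀ t ∈ Icc a b, LipschitzOnWith K (F t) S) (hVS : ∀ β ∈ U, MapsTo (V β) (Icc a b) S)
    {c D : ℝ → ℝ} (hc : ∀ t ∈ Ioo a b, HasDerivAt (F t) (c t) (V α t))
    (hD : ∀ t ∈ Icc a b, HasDerivAt (fun β => V β t) (D t) α) :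
    ∃ w z, IsCaraSol a b (fun t x => c t * x) w z ∧ w a = 1 ∧ z a = 0 ∧ EqOn w D (Icc a b) := by
  obtain ⟨C, hC⟩ := hV.exists_lipschitzOnWith hF hVS
  have hlip : ∀ t ∈ Icc a b, LipschitzOnWith (K * C) (fun β => F t (V β t)) U := fun t ht =>
    (hF t ht).comp (hC t ht) fun β hβ => hVS β hβ ht
  have hp : ∀ᵐ t, t ∈ Ioc a b → HasDerivAt (fun β => F t (V β t)) (c t * D t) α := by
    filter_upwards [compl_mem_ae_iff.2 (measure_singleton b)] with t htb ht
    exact (hc t ⟨ht.1, ht.2.lt_of_ne htb⟩).comp α (hD t (Ioc_subset_Icc_self ht))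
  obtain ⟨w, z, hwz, hwa, hza, hw⟩ := exists_isCaraSol_of_intervalIntegrable
    (hV.hasDerivAt_deriv hU hlip hp b (right_mem_Icc.2 hab)).1 1
  have hwD : EqOn w D (Icc a b) := fun t ht =>
    (hw t ht).trans ((hV.hasDerivAt hU hlip hp t ht).unique (hD t ht))
  exact ⟨w, z, hwz.congr_ae hab (ae_restrict_of_forall_mem measurableSet_Icc
    fun t ht => congrArg (c t * ·) (hwD ht).symm), hwa, hza, hwD⟩

end IsShootingFamily

/-! ### Sturm comparison for the linearized equation -/

lemma IsCaraSol.wronskian_pos {a b τ : ℝ} {F G : ℝ → ℝ → ℝ} {u u' v v' : ℝ → ℝ}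
    (hu : IsCaraSol a b F u u') (hv : IsCaraSol a b G v v') (hu'a : u' a = 0) (hv'a : v' a = 0)
    (hτ : τ ∈ Ioc a b) (hFG : ∀ t ∈ Ioo a τ, 0 ≤ F t (u t) * v t - u t * G t (v t))
    (hpos : ∀ᶠ t in 𝓝[>] a, 0 < F t (u t) * v t - u t * G t (v t)) :
    0 < u τ * v' τ - u' τ * v τ := by
  have hτI : τ ∈ Icc a b := Ioc_subset_Icc_self hτ
  have hint := hu.integral_wronskian hv (left_mem_Icc.2 (hτ.1.le.trans hτ.2)) hτI
  rw [hu'a, hv'a, mul_zero, zero_mul, sub_zero, sub_zero] at hint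
  have hsub : uIcc a τ ⊆ uIcc a b := uIcc_subset_uIcc left_mem_uIcc (Icc_subset_uIcc hτI)
  have hsub' : uIcc a τ ⊆ Icc a b := uIcc_of_le (hτ.1.le.trans hτ.2) ▸ hsub
  rw [← hint]
  exact intervalIntegral_pos_of_eventually_pos hτ.1
    (((hu.2.1.mono_set hsub).mul_continuousOn (hv.continuousOn.mono hsub')).sub
      ((hv.2.1.mono_set hsub).continuousOn_mul (hu.continuousOn.mono hsub'))) hFG hpos

lemma IsCaraSol.integral_deriv_mul_comp {a b s t : ℝ} {F G : ℝ → ℝ → ℝ} {v v' w z g γ : ℝ → ℝ}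
    (hv : IsCaraSol a b F v v') (hw : IsCaraSol a b G w z) (hg : Continuous g)
    (hγ : ContinuousOn γ (Icc a b)) (hγg : ∀ r ∈ Ioo a b, HasDerivAt g (γ r) (v r))
    (hs : a ≤ s) (hst : s ≤ t) (ht : t ≤ b) :
    IntervalIntegrable (fun r => z r * g (v r) + w r * (γ r * v' r)) volume s t ∧
      ∫ r in s..t, (z r * g (v r) + w r * (γ r * v' r)) = w t * g (v t) - w s * g (v s) := by
  have hab : a ≤ b := hs.trans (hst.trans ht)
  have hsub : Icc s t ⊆ Icc a b := Icc_subset_Icc hs ht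
  have hgv : ContinuousOn (fun r => g (v r)) (Icc a b) := hg.comp_continuousOn hv.continuousOn
  have hint : IntervalIntegrable (fun r => z r * g (v r) + w r * (γ r * v' r)) volume s t :=
    ((((hw.isIndefiniteIntegral_deriv.continuousOn hab).mul hgv).add
      (hw.continuousOn.mul (hγ.mul (hv.isIndefiniteIntegral_deriv.continuousOn hab)))).mono
        hsub).intervalIntegrable_of_Icc hst
  refine ⟨hint, intervalIntegral.integral_eq_sub_of_hasDerivAt_of_le
    (f := fun r => w r * g (v r)) hst ((hw.continuousOn.mul hgv).mono hsub) (fun r hr => ?_) hint⟩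
  have hrI : r ∈ Icc a b := hsub (Ioo_subset_Icc_self hr)
  exact (hw.1 r hrI).mul ((hγg r ⟨hs.trans_lt hr.1, hr.2.trans_le ht⟩).comp r (hv.1 r hrI))

-- With `h = w g(v)` one has `(w' v')' = -Q h'`, to which Abel's inequality applies since `h ≤ 0`.
lemma deriv_mul_deriv_le_of_nonpos {a b τ σ : ℝ} {Q g γ v v' w z : ℝ → ℝ}
    (hQ : Antitone Q) (hQσ : 0 ≤ Q σ) (hg : Continuous g) (hg0 : ∀ s, 0 ≤ g s)
    (hγ : ContinuousOn γ (Icc a b)) (hγg : ∀ t ∈ Ioo a b, HasDerivAt g (γ t) (v t))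
    (hv : IsCaraSol a b (fun t x => Q t * g x) v v')
    (hw : IsCaraSol a b (fun t x => Q t * γ t * x) w z)
    (hτ : a ≤ τ) (hτσ : τ ≤ σ) (hσ : σ ≤ b) (hwτ : w τ = 0) (hw0 : ∀ t ∈ Icc τ σ, w t ≤ 0) :
    z τ * v' τ ≤ z σ * v' σ := by
  set h' : ℝ → ℝ := fun t => z t * g (v t) + w t * (γ t * v' t)
  have hh : ∀ x ∈ Icc τ σ, IntervalIntegrable h' volume τ x ∧
      ∫ t in τ..x, h' t = w x * g (v x) := fun x hx => by
    simpa only [hwτ, zero_mul, sub_zero] using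
      hv.integral_deriv_mul_comp hw hg hγ hγg hτ hx.1 (hx.2.trans hσ)
  have habel : 0 ≤ ∫ t in τ..σ, Q t * -h' t := by
    refine integral_antitone_mul_nonneg hτσ hQ hQσ (hh σ (right_mem_Icc.2 hτσ)).1.neg fun x hx => ?_
    rw [intervalIntegral.integral_neg, (hh x hx).2]
    exact neg_nonneg.2 (mul_nonpos_of_nonpos_of_nonneg (hw0 x hx) (hg0 _))
  have hcongr : ∫ t in τ..σ, (Q t * γ t * w t * v' t + z t * (Q t * g (v t))) =
      -∫ t in τ..σ, Q t * -h' t := by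
    rw [← intervalIntegral.integral_neg]
    exact intervalIntegral.integral_congr fun t _ => by simp only [h']; ring
  have hint := hw.integral_deriv_mul_deriv hv ⟨hτ, hτσ.trans hσ⟩ ⟨hτ.trans hτσ, hσ⟩
  linarith

/-- Condition (g₊) for a nonlinearity `g`, already extended by zero to the negative axis. -/
structure ConditionGPlus (g : ℝ → ℝ) : Prop where
  contDiffOn : ContDiffOn ℝ 1 g (Ici 0)
  pos : ∀ s > 0, 0 < g s
  eq_zero : ∀ s ≤ 0, g s = 0

namespace ConditionGPlus

variable {g : ℝ → ℝ}

lemma nonneg (hg : ConditionGPlus g) (s : ℝ) : 0 ≤ g s := by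
  rcases le_or_gt s 0 with hs | hs
  · exact (hg.eq_zero s hs).ge
  · exact (hg.pos s hs).le

lemma apply_max_zero (hg : ConditionGPlus g) (s : ℝ) : g (max s 0) = g s := by
  rcases le_total s 0 with hs | hs
  · rw [max_eq_right hs, hg.eq_zero s hs, hg.eq_zero 0 le_rfl]
  · rw [max_eq_left hs]

lemma continuous (hg : ConditionGPlus g) : Continuous g := by
  rw [← funext hg.apply_max_zero]
  exact hg.contDiffOn.continuousOn.comp_continuous (continuous_id.max continuous_const)
    fun s => le_max_right s 0

lemma hasDerivAt (hg : ConditionGPlus g) {s : ℝ} (hs : 0 < s) :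
    HasDerivAt g (derivWithin g (Ici 0) s) s :=
  (hg.contDiffOn.differentiableOn one_ne_zero s hs.le).hasDerivWithinAt.hasDerivAt (Ici_mem_nhds hs)

lemma continuousOn_derivWithin (hg : ConditionGPlus g) :
    ContinuousOn (derivWithin g (Ici 0)) (Ici 0) :=
  hg.contDiffOn.continuousOn_derivWithin (uniqueDiffOn_Ici 0) le_rfl

lemma exists_lipschitzOnWith (hg : ConditionGPlus g) (M : ℝ) :
    ∃ L, LipschitzOnWith L g (Iic M) := by
  have hsub : Icc 0 (max M 0) ⊆ Ici 0 := Icc_subset_Ici_self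
  obtain ⟨L, hL⟩ := LocallyLipschitzOn.exists_lipschitzOnWith_of_compact isCompact_Icc
    fun s hs => (hg.contDiffOn.mono hsub s hs).exists_lipschitzOnWith (convex_Icc 0 (max M 0))
  refine ⟨L * 1, ?_⟩
  rw [← funext hg.apply_max_zero]
  exact hL.comp (LipschitzWith.id.max_const 0).lipschitzOnWith
    fun s hs => ⟨le_max_right _ _, max_le_max_right _ hs⟩

end ConditionGPlus

/-- A non-increasing non-negative weight that is positive immediately to the right of `a`. A weight
`q` given only on `[a, b]` and up to null sets is replaced by one defined everywhere. -/
structure IsDecreasingWeight (a : ℝ) (Q : ℝ → ℝ) : Prop where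
  antitone : Antitone Q
  nonneg : ∀ t, 0 ≤ Q t
  eventually_pos : ∀ᶠ t in 𝓝[>] a, 0 < Q t

lemma exists_isDecreasingWeight_ae_eq {q : ℝ → ℝ} {a b : ℝ} (hq : AntitoneOn q (Icc a b))
    (hq_nonneg : ∀ᵐ t ∂volume.restrict (Icc a b), 0 ≤ q t)
    (hq_ne : ¬ ∀ᵐ t ∂volume.restrict (Icc a b), q t = 0) :
    ∃ Q, IsDecreasingWeight a Q ∧ q =ᵐ[volume.restrict (Icc a b)] Q := by
  obtain ⟨P, hP, hPq⟩ := hq.exists_antitone_extension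
    ⟨q b, forall_mem_image.2 fun t ht => hq ht ⟨ht.1.trans ht.2, le_rfl⟩ ht.2⟩
    ⟨q a, forall_mem_image.2 fun t ht => hq ⟨le_rfl, ht.1.trans ht.2⟩ ht ht.1⟩
  have hqP : ∀ᵐ t ∂volume.restrict (Icc a b), q t = max (P t) 0 := by
    filter_upwards [hq_nonneg, ae_restrict_mem measurableSet_Icc] with t ht htab
    rw [← hPq htab, max_eq_left ht]
  refine ⟨fun t => max (P t) 0, ⟨hP.max antitone_const, fun t => le_max_right _ _, ?_⟩, hqP⟩
  obtain ⟨c, hac, hPc⟩ : ∃ c, a < c ∧ 0 < P c := by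
    by_contra! hP0
    refine hq_ne ?_
    filter_upwards [hqP, ae_restrict_mem measurableSet_Icc,
      ae_restrict_of_ae (compl_mem_ae_iff.2 (measure_singleton a))] with t hqt ht hta
    rw [hqt, max_eq_right (hP0 t (ht.1.lt_of_ne' hta))]
  filter_upwards [Ioo_mem_nhdsGT hac] with t ht
  exact lt_max_of_lt_left (hPc.trans_le (hP ht.2.le))

section SturmComparison

variable {a b : ℝ} {Q g v v' w z : ℝ → ℝ}

lemma IsDecreasingWeight.wronskian_linearization_pos {γ : ℝ → ℝ} {τ : ℝ}
    (hQ : IsDecreasingWeight a Q)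
    (hv : IsCaraSol a b (fun t x => Q t * g x) v v') (hv'a : v' a = 0)
    (hw : IsCaraSol a b (fun t x => Q t * γ t * x) w z) (hza : z a = 0)
    (hγ : ∀ t ∈ Ioo a b, g (v t) < γ t * v t) (hτ : τ ∈ Ioc a b)
    (hwτ : ∀ t ∈ Ico a τ, 0 < w t) :
    0 < w τ * v' τ - z τ * v τ := by
  have hfactor : ∀ t, Q t * γ t * w t * v t - w t * (Q t * g (v t)) =
      Q t * (w t * (γ t * v t - g (v t))) := fun t => by ring
  have hpos : ∀ t ∈ Ioo a τ, 0 < w t * (γ t * v t - g (v t)) := fun t ht =>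
    mul_pos (hwτ t (Ioo_subset_Ico_self ht)) (sub_pos.2 (hγ t ⟨ht.1, ht.2.trans_le hτ.2⟩))
  refine hw.wronskian_pos hv hza hv'a hτ (fun t ht => ?_) ?_
  · rw [hfactor]
    exact mul_nonneg (hQ.nonneg t) (hpos t ht).le
  · filter_upwards [hQ.eventually_pos, Ioo_mem_nhdsGT hτ.1] with t hQt ht
    rw [hfactor]
    exact mul_pos hQt (hpos t ht)

lemma exists_linearization_zero {γ : ℝ → ℝ} (hab : a < b) (hQ : IsDecreasingWeight a Q)
    (hv : IsCaraSol a b (fun t x => Q t * g x) v v') (hv'a : v' a = 0) (hv'b : v' b < 0)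
    (hvpos : ∀ t ∈ Ico a b, 0 < v t) (hvb : v b = 0) (hγ : ∀ t ∈ Ioo a b, g (v t) < γ t * v t)
    (hw : IsCaraSol a b (fun t x => Q t * γ t * x) w z) (hwa : 0 < w a) (hza : z a = 0) :
    ∃ τ ∈ Ioo a b, w τ = 0 ∧ z τ < 0 := by
  have hwronskian : ∀ τ ∈ Ioc a b, (∀ t ∈ Ico a τ, 0 < w t) → 0 < w τ * v' τ - z τ * v τ :=
    fun τ => hQ.wronskian_linearization_pos hv hv'a hw hza hγ
  obtain ⟨c, hc, hwc⟩ : ∃ c ∈ Icc a b, w c ≤ 0 := by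
    by_contra! hwpos
    have hW := hwronskian b (right_mem_Ioc.2 hab) fun t ht => hwpos t (Ico_subset_Icc_self ht)
    rw [hvb, mul_zero, sub_zero] at hW
    exact (mul_neg_of_pos_of_neg (hwpos b (right_mem_Icc.2 hab.le)) hv'b).not_gt hW
  obtain ⟨τ, hτ, hwτ, hwpos⟩ :=
    exists_first_zero hc.1 (hw.continuousOn.mono (Icc_subset_Icc_right hc.2)) hwa hwc
  have hτb : τ ≤ b := hτ.2.trans hc.2
  have hW := hwronskian τ ⟨hτ.1, hτb⟩ hwpos
  rw [hwτ, zero_mul, zero_sub, neg_pos] at hW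
  have hτb' : τ < b := hτb.lt_of_ne <| by
    rintro rfl
    exact hW.ne (by rw [hvb, mul_zero])
  exact ⟨τ, ⟨hτ.1, hτb'⟩, hwτ, neg_of_mul_neg_left hW (hvpos τ ⟨hτ.1.le, hτb'⟩).le⟩

lemma linearization_neg_of_eq_zero {γ : ℝ → ℝ} (hab : a < b) (hQ : IsDecreasingWeight a Q)
    (hg : Continuous g) (hg0 : ∀ s, 0 ≤ g s)
    (hv : IsCaraSol a b (fun t x => Q t * g x) v v') (hv'a : v' a = 0)
    (hv' : ∀ t ∈ Ioc a b, v' t < 0) (hvpos : ∀ t ∈ Ico a b, 0 < v t) (hvb : v b = 0)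
    (hγ : ContinuousOn γ (Icc a b)) (hγg : ∀ t ∈ Ioo a b, HasDerivAt g (γ t) (v t))
    (hγv : ∀ t ∈ Ioo a b, g (v t) < γ t * v t)
    (hw : IsCaraSol a b (fun t x => Q t * γ t * x) w z) (hwa : 0 < w a) (hza : z a = 0) :
    w b < 0 := by
  obtain ⟨τ, hτ, hwτ, hzτ⟩ := exists_linearization_zero hab hQ hv hv'a
    (hv' b (right_mem_Ioc.2 hab)) hvpos hvb hγv hw hwa hza
  by_contra! hwb
  obtain ⟨σ, hσ, hwσ, hzσ, hneg⟩ := exists_next_zero hτ.2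
    (fun t ht => hw.1 t ⟨hτ.1.le.trans ht.1, ht.2⟩) hwτ hzτ hwb
  have hle : z τ * v' τ ≤ z σ * v' σ := by
    refine deriv_mul_deriv_le_of_nonpos hQ.antitone (hQ.nonneg σ) hg hg0 hγ hγg hv hw hτ.1.le
      hσ.1.le hσ.2 hwτ fun t ht => ?_
    rcases ht.1.eq_or_lt with rfl | hτt
    · exact hwτ.le
    rcases ht.2.eq_or_lt with rfl | htσ
    · exact hwσ.le
    · exact (hneg t ⟨hτt, htσ⟩).le
  have hτpos : 0 < z τ * v' τ := mul_pos_of_neg_of_neg hzτ (hv' τ (Ioo_subset_Ioc_self hτ))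
  have hσnonpos : z σ * v' σ ≤ 0 :=
    mul_nonpos_of_nonneg_of_nonpos hzσ (hv' σ ⟨hτ.1.trans hσ.1, hσ.2⟩).le
  exact (hτpos.trans_le hle).not_ge hσnonpos

end SturmComparison

section Moroney

variable {a b α : ℝ} {Q g v v' : ℝ → ℝ} {V V' : ℝ → ℝ → ℝ}

lemma IsDecreasingWeight.deriv_neg (hQ : IsDecreasingWeight a Q) (hg : ConditionGPlus g)
    (hv : IsCaraSol a b (fun t x => Q t * g x) v v') (hv'a : v' a = 0) (hva : 0 < v a) :
    ∀ t ∈ Ioc a b, v' t < 0 := by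
  intro t ht
  have hvpos : ∀ᶠ s in 𝓝[>] a, 0 < v s := nhdsWithin_le_nhds <|
    (hv.1 a (left_mem_Icc.2 (ht.1.le.trans ht.2))).continuousAt.eventually (lt_mem_nhds hva)
  refine hv.deriv_neg hv'a (fun s _ => mul_nonneg (hQ.nonneg s) (hg.nonneg _)) ?_ t ht
  filter_upwards [hQ.eventually_pos, hvpos] with s hQs hvs using mul_pos hQs (hg.pos _ hvs)

lemma IsDecreasingWeight.lipschitzOnWith_mul {M : ℝ} {L : NNReal} (hQ : IsDecreasingWeight a Q)
    (hg : LipschitzOnWith L g (Iic M)) :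
    ∀ t ∈ Icc a b, LipschitzOnWith ((Q a).toNNReal * L) (fun x => Q t * g x) (Iic M) := by
  intro t ht
  refine LipschitzOnWith.of_dist_le_mul fun x hx y hy => ?_
  rw [dist_eq_norm, ← mul_sub, norm_mul, Real.norm_of_nonneg (hQ.nonneg t), ← dist_eq_norm,
    NNReal.coe_mul, Real.coe_toNNReal _ (hQ.nonneg a), mul_assoc]
  exact mul_le_mul (hQ.antitone ht.1) (hg.dist_le_mul x hx y hy) dist_nonneg (hQ.nonneg a)

lemma IsShootingFamily.exists_linearized_solution_of_pos {D : ℝ → ℝ} (hab : a ≤ b)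
    (hQ : IsDecreasingWeight a Q) (hg : ConditionGPlus g)
    (hV : IsShootingFamily a b (fun t x => Q t * g x) (Ioi 0) V V') (hα : 0 < α)
    (hVα : ∀ t ∈ Ico a b, 0 < V α t)
    (hD : ∀ t ∈ Icc a b, HasDerivAt (fun β => V β t) (D t) α) :
    ∃ w z, IsCaraSol a b (fun t x => Q t * derivWithin g (Ici 0) (V α t) * x) w z ∧
      w a = 1 ∧ z a = 0 ∧ EqOn w D (Icc a b) := by
  obtain ⟨L, hL⟩ := hg.exists_lipschitzOnWith (α + 1)
  refine (hV.mono Ioo_subset_Ioi_self).exists_linearized_solution hab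
    (Ioo_mem_nhds hα (lt_add_one α)) (hQ.lipschitzOnWith_mul hL) (fun β hβ t ht => ?_)
    (fun t ht => (hg.hasDerivAt (hVα t (Ioo_subset_Ico_self ht))).const_mul (Q t)) hD
  have hVβ := hV.isCaraSol β hβ.1
  have hβa : V β a = β := hV.apply_left β hβ.1
  have hanti : StrictAntiOn (V β) (Icc a b) :=
    hVβ.strictAntiOn (hQ.deriv_neg hg hVβ (hV.deriv_left β hβ.1) (hβa.symm ▸ hβ.1))
  exact ((hanti.antitoneOn (left_mem_Icc.2 hab) ht ht.1).trans_eq hβa).trans hβ.2.le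

lemma IsShootingFamily.deriv_param_neg_of_eq_zero {D : ℝ → ℝ} (hab : a < b)
    (hQ : IsDecreasingWeight a Q) (hg : ConditionGPlus g) (hgs : ∀ s > 0, g s / s < deriv g s)
    (hV : IsShootingFamily a b (fun t x => Q t * g x) (Ioi 0) V V') (hα : 0 < α)
    (hVb : V α b = 0) (hD : ∀ t ∈ Icc a b, HasDerivAt (fun β => V β t) (D t) α) :
    D b < 0 := by
  have hv := hV.isCaraSol α hα
  have hva : V α a = α := hV.apply_left α hα
  have hv' : ∀ t ∈ Ioc a b, V' α t < 0 :=
    hQ.deriv_neg hg hv (hV.deriv_left α hα) (hva.symm ▸ hα)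
  have hvpos : ∀ t ∈ Ico a b, 0 < V α t := fun t ht => by
    rw [← hVb]
    exact hv.strictAntiOn hv' (Ico_subset_Icc_self ht) (right_mem_Icc.2 hab.le) ht.2
  have hvnonneg : MapsTo (V α) (Icc a b) (Ici 0) := fun t ht => by
    rcases ht.2.eq_or_lt with rfl | htb
    · exact hVb.ge
    · exact (hvpos t ⟨ht.1, htb⟩).le
  have hγg : ∀ t ∈ Ioo a b, HasDerivAt g (derivWithin g (Ici 0) (V α t)) (V α t) :=
    fun t ht => hg.hasDerivAt (hvpos t (Ioo_subset_Ico_self ht))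
  have hγv : ∀ t ∈ Ioo a b, g (V α t) < derivWithin g (Ici 0) (V α t) * V α t := fun t ht => by
    have hpos := hvpos t (Ioo_subset_Ico_self ht)
    rw [← div_lt_iff₀ hpos, ← (hγg t ht).deriv]
    exact hgs _ hpos
  obtain ⟨w, z, hw, hwa, hza, hwD⟩ :=
    hV.exists_linearized_solution_of_pos hab.le hQ hg hα hvpos hD
  rw [← hwD (right_mem_Icc.2 hab.le)]
  exact linearization_neg_of_eq_zero hab hQ hg.continuous hg.nonneg hv (hV.deriv_left α hα) hv'
    hvpos hVb (hg.continuousOn_derivWithin.comp hv.continuousOn hvnonneg) hγg hγv hw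
    (hwa ▸ one_pos) hza

end Moroney

lemma apply_eq_zero_of_firstZero_eq {a b α : ℝ} {V : ℝ → ℝ → ℝ} (hα : α ∈ domB a b V)
    (hB : firstZero a b V α = b) : V α b = 0 := by
  obtain ⟨-, t, ht, hVt⟩ := hα
  have hbt : b ≤ t := hB.symm.trans_le (csInf_le ⟨a, fun s hs => hs.1.1.le⟩ ⟨ht, hVt⟩)
  rwa [ht.2.antisymm hbt] at hVt

/-- **Moroney-type uniqueness for mixed boundary conditions.**
For a non-increasing BV weight `q ≥ 0`, `q ≢ 0`, and `g` satisfying `(g₊)` and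
`(g_s)`, one has `∂_α v(b;α) < 0` whenever `B(α) = b`; in particular the problem
`u'' + q(t) g(u) = 0`, `u'(a) = 0 = u(b)` has at most one positive solution. -/
theorem moroney_mixed_bc
    (a b : ℝ) (hab : a < b)
    (q : ℝ → ℝ)
    (hq_bv : BoundedVariationOn q (Set.Icc a b))
    (hq_mono : AntitoneOn q (Set.Icc a b))
    (hq_int : IntegrableOn q (Set.Icc a b))
    (hq_nonneg : ∀ᵐ t ∂(volume.restrict (Set.Icc a b)), 0 ≤ q t)
    (hq_ne : ¬ (∀ᵐ t ∂(volume.restrict (Set.Icc a b)), q t = 0))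
    (g : ℝ → ℝ)
    (hg_C1 : ContDiffOn ℝ 1 g (Set.Ici 0))
    (hg0 : g 0 = 0)
    (hg_pos : ∀ s > 0, 0 < g s)
    (hg_ext : ∀ s ≤ (0 : ℝ), g s = 0)
    (hg_s : ∀ s > (0 : ℝ), g s / s < deriv g s)
    -- the shooting family `V α = v(·;α)` with `v(a;α) = α`, `v'(a;α) = 0`,
    -- with time-derivative `V' α` and derivative `DV α t = ∂_α v(t;α)`:
    (V V' DV : ℝ → ℝ → ℝ)
    (hV_sol : ∀ α > (0 : ℝ), IsCaraSol a b (fun s x => q s * g x) (V α) (V' α))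
    (hV_init : ∀ α > (0 : ℝ), V α a = α ∧ V' α a = 0)
    (hV_uniq : ∀ α > (0 : ℝ), ∀ v v' : ℝ → ℝ,
        IsCaraSol a b (fun s x => q s * g x) v v' → v a = α → v' a = 0 →
        ∀ t ∈ Set.Icc a b, v t = V α t)
    (hDV : ∀ α > (0 : ℝ), ∀ t ∈ Set.Icc a b, HasDerivAt (fun β => V β t) (DV α t) α) :
    (∀ α ∈ domB a b V, firstZero a b V α = b → DV α b < 0) ∧
    (∀ u u₁ v v₁ : ℝ → ℝ,
      IsCaraSol a b (fun s x => q s * g x) u u₁ → u₁ a = 0 → u b = 0 →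
        (∀ t ∈ Set.Ico a b, 0 < u t) →
      IsCaraSol a b (fun s x => q s * g x) v v₁ → v₁ a = 0 → v b = 0 →
        (∀ t ∈ Set.Ico a b, 0 < v t) →
      Set.EqOn u v (Set.Icc a b)) := by
  obtain ⟨Q, hQ, hqQ⟩ := exists_isDecreasingWeight_ae_eq hq_mono hq_nonneg hq_ne
  have hV : IsShootingFamily a b (fun s x => Q s * g x) (Ioi 0) V V' :=
    ⟨fun α hα => (hV_sol α hα).congr_ae hab.le (hqQ.mono fun s hs => congrArg (· * _) hs),
      fun α hα => (hV_init α hα).1, fun α hα => (hV_init α hα).2⟩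
  have hneg : ∀ α > 0, V α b = 0 → DV α b < 0 := fun α hα hVb =>
    hV.deriv_param_neg_of_eq_zero hab hQ ⟨hg_C1, hg_pos, hg_ext⟩ hg_s hα hVb (hDV α hα)
  refine ⟨fun α hα hB => hneg α hα.1 (apply_eq_zero_of_firstZero_eq hα hB),
    fun u u' v v' hu hu'a hub hupos hv hv'a hvb hvpos t ht => ?_⟩
  have ha := left_mem_Ico.2 hab
  have hb := right_mem_Icc.2 hab.le
  have huV := hV_uniq (u a) (hupos a ha) u u' hu rfl hu'a
  have hvV := hV_uniq (v a) (hvpos a ha) v v' hv rfl hv'a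
  have huva : u a = v a :=
    subsingleton_zeros_of_deriv_neg ordConnected_Ioi (fun α hα => hDV α hα b hb) hneg
      ⟨hupos a ha, (huV b hb).symm.trans hub⟩ ⟨hvpos a ha, (hvV b hb).symm.trans hvb⟩
  rw [huV t ht, hvV t ht, huva]
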